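/- Let (X, 𝒜, μ) be a complete measure space with a partial order ≤, let I ⊆ ℝ be a non-empty closed interval, let q ∈ (1, ∞), and let f ∈ L^q(X, μ, ℝ). Then every minimizing sequence (p_n) for the functional g ↦ ‖f − g‖_q^q on L^q_≤(X, μ, I) converges in the q-norm to the unique minimizer p(f). -/

import Mathlib

open MeasureTheory Filter
open scoped ENNReal

/-- The elements of `L^q(X, μ, ℝ)` having a representative that is isotonic off a `μ`-null
set and takes values in `I` almost everywhere. -/
def isoLq {X : Type*} [MeasurableSpace X] [PartialOrder X]
    (μ : Measure X) (q : ℝ≥0∞) (I : Set ℝ) : Set (Lp ℝ q μ) :=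
  {f | ∃ f₀ : X → ℝ, (⇑f) =ᵐ[μ] f₀ ∧
    (∃ N : Set X, μ N = 0 ∧ ∀ x ∉ N, ∀ y ∉ N, x ≤ y → f₀ x ≤ f₀ y) ∧
    ∀ᵐ x ∂μ, f₀ x ∈ I}

/-! Uniform convexity of the norm quantifies the convexity inequality
`‖a + b‖ ^ r ≤ 2 ^ (r - 1) * (‖a‖ ^ r + ‖b‖ ^ r)`: up to an arbitrarily small multiple of
`‖a‖ ^ r + ‖b‖ ^ r`, the gap between its two sides controls `‖a - b‖ ^ r`. For `r = q` this
estimate can be integrated, so `L^q` is uniformly convex. For `r = 2`, applied to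
`a = f - pₙ` and `b = f - p(f)` in `L^q`, the gap tends to `0` along a minimizing sequence, since
the midpoint of `pₙ` and `p(f)` is again a competitor. -/

section PowConvexityGap

variable {E : Type*} [NormedAddCommGroup E]

/-- The gap in the convexity inequality `‖a + b‖ ^ r ≤ 2 ^ (r - 1) * (‖a‖ ^ r + ‖b‖ ^ r)` for the
`r`-th power of the norm. It is written with `a + b` instead of the midpoint of `a` and `b`, so
that it makes sense without scalars. -/
noncomputable def powConvexityGap (r : ℝ) (a b : E) : ℝ :=
  2 ^ (r - 1) * (‖a‖ ^ r + ‖b‖ ^ r) - ‖a + b‖ ^ r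

lemma powConvexityGap_comm (r : ℝ) (a b : E) : powConvexityGap r a b = powConvexityGap r b a := by
  rw [powConvexityGap, powConvexityGap, add_comm (‖a‖ ^ r), add_comm a]

lemma powConvexityGap_nonneg {r : ℝ} (hr : 1 ≤ r) (a b : E) : 0 ≤ powConvexityGap r a b := by
  refine sub_nonneg.2 ?_
  calc ‖a + b‖ ^ r ≤ (‖a‖ + ‖b‖) ^ r := by gcongr; exact norm_add_le a b
    _ ≤ 2 ^ (r - 1) * (‖a‖ ^ r + ‖b‖ ^ r) := by
      exact_mod_cast NNReal.rpow_add_le_mul_rpow_add_rpow ‖a‖₊ ‖b‖₊ hr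

variable [NormedSpace ℝ E]

lemma norm_smul_rpow {c : ℝ} (hc : 0 ≤ c) (r : ℝ) (a : E) : ‖c • a‖ ^ r = c ^ r * ‖a‖ ^ r := by
  rw [norm_smul_of_nonneg hc, Real.mul_rpow hc (norm_nonneg a)]

lemma powConvexityGap_smul {c : ℝ} (hc : 0 ≤ c) (r : ℝ) (a b : E) :
    powConvexityGap r (c • a) (c • b) = c ^ r * powConvexityGap r a b := by
  simp only [powConvexityGap, ← smul_add, norm_smul_rpow hc]
  ring

end PowConvexityGap

section UniformConvexity

lemma add_rpow_lt_two_rpow_mul_add_rpow {r s t : ℝ} (hr : 1 < r) (hs : 0 ≤ s) (ht : 0 ≤ t)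
    (hst : s ≠ t) : (s + t) ^ r < 2 ^ (r - 1) * (s ^ r + t ^ r) := by
  have hmid : ((s + t) / 2) ^ r < (s ^ r + t ^ r) / 2 := by
    simpa only [smul_eq_mul, one_div_mul_eq_div, ← add_div] using
      (strictConvexOn_rpow hr).2 hs ht hst one_half_pos one_half_pos (add_halves 1)
  rw [Real.div_rpow (add_nonneg hs ht) zero_le_two, div_lt_iff₀ (by positivity)] at hmid
  rw [Real.rpow_sub_one two_ne_zero]
  linarith

-- With `t = ‖b‖` and `‖a‖ = 1`, `1 + t` and `ρ` are the bounds on `‖a + b‖` from the triangle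
-- inequality and from uniform convexity; the first gives strictness for `t < 1`, the second at `1`.
lemma exists_pos_min_one_add_rpow_add_le {r ρ : ℝ} (hr : 1 < r) (hρ : 0 ≤ ρ) (hρ2 : ρ < 2) :
    ∃ δ > 0, ∀ t ∈ Set.Icc (0 : ℝ) 1, min ρ (1 + t) ^ r + δ ≤ 2 ^ (r - 1) * (1 + t ^ r) := by
  have hr0 : 0 < r := zero_lt_one.trans hr
  have hrpow : Continuous fun t : ℝ => t ^ r := Real.continuous_rpow_const hr0.le
  have hcont : Continuous fun t : ℝ => 2 ^ (r - 1) * (1 + t ^ r) - min ρ (1 + t) ^ r :=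
    ((hrpow.const_add 1).const_mul _).sub (hrpow.comp (by fun_prop))
  have hpos : ∀ t ∈ Set.Icc (0 : ℝ) 1, 0 < 2 ^ (r - 1) * (1 + t ^ r) - min ρ (1 + t) ^ r := by
    rintro t ⟨ht0, ht1⟩
    have hmin : 0 ≤ min ρ (1 + t) := le_min hρ (by linarith)
    rw [sub_pos]
    rcases ht1.eq_or_lt with rfl | ht1
    · calc min ρ (1 + 1) ^ r < 2 ^ r := by gcongr; exact min_lt_of_left_lt hρ2
        _ = 2 ^ (r - 1) * (1 + 1 ^ r) := by
          rw [Real.rpow_sub_one two_ne_zero, Real.one_rpow]; ring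
    · calc min ρ (1 + t) ^ r ≤ (1 + t) ^ r := by gcongr; exact min_le_right _ _
        _ < 2 ^ (r - 1) * (1 + t ^ r) := by
          simpa only [Real.one_rpow] using
            add_rpow_lt_two_rpow_mul_add_rpow hr zero_le_one ht0 ht1.ne'
  obtain ⟨δ, hδ, hle⟩ := isCompact_Icc.exists_forall_le' hcont.continuousOn hpos
  exact ⟨δ, hδ, fun t ht => by linarith [hle t ht]⟩

variable {E : Type*} [NormedAddCommGroup E] [NormedSpace ℝ E] [UniformConvexSpace E] {r ε : ℝ}

variable (E) in
lemma exists_pos_forall_le_powConvexityGap (hr : 1 < r) (hε : 0 < ε) :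
    ∃ δ > 0, ∀ a b : E, ‖a‖ = 1 → ‖b‖ ≤ 1 → ε ≤ ‖a - b‖ → δ ≤ powConvexityGap r a b := by
  obtain ⟨η, hη, hconv⟩ := exists_forall_closed_ball_dist_add_le_two_sub E hε
  obtain ⟨δ, hδ, hle⟩ := exists_pos_min_one_add_rpow_add_le hr (le_max_left 0 (2 - η))
    (max_lt two_pos (by linarith))
  refine ⟨δ, hδ, fun a b ha hb hab => ?_⟩
  have hnorm : ‖a + b‖ ≤ min (max 0 (2 - η)) (1 + ‖b‖) :=
    le_min (le_max_of_le_right (hconv ha.le hb hab)) (ha ▸ norm_add_le a b)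
  have hpow := Real.rpow_le_rpow (norm_nonneg _) hnorm (zero_le_one.trans hr.le)
  rw [powConvexityGap, ha, Real.one_rpow]
  linarith [hle ‖b‖ ⟨norm_nonneg b, hb⟩]

variable (E) in
lemma exists_pos_norm_sub_rpow_le_of_norm_eq_one (hr : 1 < r) (hε : 0 < ε) :
    ∃ C > 0, ∀ a b : E, ‖a‖ = 1 → ‖b‖ ≤ 1 →
      ‖a - b‖ ^ r ≤ ε * (‖a‖ ^ r + ‖b‖ ^ r) + C * powConvexityGap r a b := by
  have hr0 : 0 < r := zero_lt_one.trans hr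
  obtain ⟨δ, hδ, hgap⟩ :=
    exists_pos_forall_le_powConvexityGap E hr (Real.rpow_pos_of_pos hε r⁻¹)
  refine ⟨2 ^ r / δ, by positivity, fun a b ha hb => ?_⟩
  have hnonneg := powConvexityGap_nonneg hr.le a b
  rcases lt_or_ge ‖a - b‖ (ε ^ r⁻¹) with hab | hab
  · calc ‖a - b‖ ^ r ≤ (ε ^ r⁻¹) ^ r := by gcongr
      _ = ε * (‖a‖ ^ r + 0) := by
        rw [Real.rpow_inv_rpow hε.le hr0.ne', ha, Real.one_rpow, add_zero, mul_one]
      _ ≤ ε * (‖a‖ ^ r + ‖b‖ ^ r) := by gcongr; positivity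
      _ ≤ ε * (‖a‖ ^ r + ‖b‖ ^ r) + 2 ^ r / δ * powConvexityGap r a b :=
        le_add_of_nonneg_right (by positivity)
  · calc ‖a - b‖ ^ r ≤ 2 ^ r := by gcongr; linarith [norm_sub_le a b]
      _ = 2 ^ r / δ * δ := (div_mul_cancel₀ _ hδ.ne').symm
      _ ≤ 2 ^ r / δ * powConvexityGap r a b := by gcongr; exact hgap a b ha hb hab
      _ ≤ ε * (‖a‖ ^ r + ‖b‖ ^ r) + 2 ^ r / δ * powConvexityGap r a b :=
        le_add_of_nonneg_left (by positivity)

variable (E) in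
lemma exists_pos_norm_sub_rpow_le (hr : 1 < r) (hε : 0 < ε) :
    ∃ C > 0, ∀ a b : E,
      ‖a - b‖ ^ r ≤ ε * (‖a‖ ^ r + ‖b‖ ^ r) + C * powConvexityGap r a b := by
  obtain ⟨C, hC, hunit⟩ := exists_pos_norm_sub_rpow_le_of_norm_eq_one E hr hε
  refine ⟨C, hC, fun a b => ?_⟩
  wlog hba : ‖b‖ ≤ ‖a‖ generalizing a b
  · rw [norm_sub_rev, add_comm (‖a‖ ^ r), powConvexityGap_comm]
    exact this b a (le_of_not_ge hba)
  rcases eq_or_ne a 0 with rfl | ha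
  · obtain rfl : b = 0 := norm_le_zero_iff.1 (by simpa only [norm_zero] using hba)
    have hgap := powConvexityGap_nonneg hr.le (0 : E) 0
    rw [sub_zero, norm_zero, Real.zero_rpow (by linarith)]
    positivity
  have hc : 0 < ‖a‖⁻¹ := inv_pos.2 (norm_pos_iff.2 ha)
  have hscaled := hunit (‖a‖⁻¹ • a) (‖a‖⁻¹ • b) (norm_smul_inv_norm (𝕜 := ℝ) ha)
    (by rw [norm_smul_of_nonneg hc.le]; exact inv_mul_le_one_of_le₀ hba (norm_nonneg a))
  simp only [← smul_sub, norm_smul_rpow hc.le, powConvexityGap_smul hc.le] at hscaled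
  refine le_of_mul_le_mul_left (hscaled.trans_eq ?_) (Real.rpow_pos_of_pos hc r)
  ring

lemma tendsto_of_tendsto_norm_of_tendsto_norm_add {ι : Type*} {l : Filter ι} {u : ι → E} {b : E}
    (hnorm : Tendsto (fun i => ‖u i‖) l (nhds ‖b‖))
    (hadd : Tendsto (fun i => ‖u i + b‖) l (nhds (2 * ‖b‖))) : Tendsto u l (nhds b) := by
  have hgap : Tendsto (fun i => powConvexityGap 2 (u i) b) l (nhds 0) := by
    have hlim := (((hnorm.pow 2).add_const (‖b‖ ^ 2)).const_mul 2).sub (hadd.pow 2)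
    rw [show 2 * (‖b‖ ^ 2 + ‖b‖ ^ 2) - (2 * ‖b‖) ^ 2 = 0 by ring] at hlim
    refine hlim.congr fun i => ?_
    rw [powConvexityGap]
    norm_num
  rw [tendsto_iff_norm_sub_tendsto_zero]
  refine (nhds_basis_abs_sub_lt (0 : ℝ)).tendsto_right_iff.2 fun η hη => ?_
  obtain ⟨ε, hε, hεη⟩ := exists_pos_mul_lt (pow_pos hη 2) (‖b‖ ^ 2 + ‖b‖ ^ 2)
  obtain ⟨C, -, hC⟩ := exists_pos_norm_sub_rpow_le E one_lt_two hε
  have hbound := (((hnorm.pow 2).add_const (‖b‖ ^ 2)).const_mul ε).add (hgap.const_mul C)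
  have hlimit : ε * (‖b‖ ^ 2 + ‖b‖ ^ 2) + C * 0 < η ^ 2 := by linarith
  filter_upwards [hbound.eventually_lt_const hlimit] with i hi
  have hsq := hC (u i) b
  simp only [Real.rpow_two] at hsq
  rw [sub_zero, abs_norm]
  exact lt_of_pow_lt_pow_left₀ 2 hη.le (hsq.trans_lt hi)

theorem tendsto_of_isMinOn_norm_sub {K : Set E} (hK : Convex ℝ K)
    {x y : E} (hy : y ∈ K) (hmin : IsMinOn (fun z => ‖x - z‖) K y) {ι : Type*} {l : Filter ι}
    {u : ι → E} (hu : ∀ i, u i ∈ K) (hlim : Tendsto (fun i => ‖x - u i‖) l (nhds ‖x - y‖)) :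
    Tendsto u l (nhds y) := by
  have hlower : ∀ i, 2 * ‖x - y‖ ≤ ‖(x - u i) + (x - y)‖ := fun i =>
    calc 2 * ‖x - y‖ ≤ 2 * ‖x - midpoint ℝ (u i) y‖ := by
          gcongr; exact hmin (hK.midpoint_mem (hu i) hy)
      _ = ‖(2 : ℝ) • (x - midpoint ℝ (u i) y)‖ := by rw [norm_smul_of_nonneg zero_le_two]
      _ = ‖(x - u i) + (x - y)‖ := by
        rw [midpoint_eq_smul_add, invOf_eq_inv]; congr 1; module
  have hadd : Tendsto (fun i => ‖(x - u i) + (x - y)‖) l (nhds (2 * ‖x - y‖)) := by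
    refine tendsto_of_tendsto_of_tendsto_of_le_of_le tendsto_const_nhds ?_ hlower
      fun i => norm_add_le (x - u i) (x - y)
    simpa only [two_mul] using hlim.add_const ‖x - y‖
  simpa only [sub_sub_cancel] using
    (tendsto_of_tendsto_norm_of_tendsto_norm_add hlim hadd).const_sub x

end UniformConvexity

section Lp

variable {X E : Type*} [MeasurableSpace X] {μ : Measure X} [NormedAddCommGroup E] {q : ℝ≥0∞}

lemma Lp_norm_rpow_eq_integral (hq0 : q ≠ 0) (hq : q ≠ ∞) (u : Lp E q μ) :
    ‖u‖ ^ q.toReal = ∫ x, ‖u x‖ ^ q.toReal ∂μ := by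
  have hint : 0 ≤ ∫ x, ‖u x‖ ^ q.toReal ∂μ := integral_nonneg fun x => by positivity
  rw [Lp.norm_def, (Lp.memLp u).eLpNorm_eq_integral_rpow_norm hq0 hq,
    ENNReal.toReal_ofReal (by positivity),
    Real.rpow_inv_rpow hint (ENNReal.toReal_pos hq0 hq).ne']

lemma integrable_Lp_norm_rpow (hq0 : q ≠ 0) (hq : q ≠ ∞) (u : Lp E q μ) :
    Integrable (fun x => ‖u x‖ ^ q.toReal) μ :=
  (Lp.memLp u).integrable_norm_rpow hq0 hq

lemma integrable_Lp_norm_rpow_add (hq0 : q ≠ 0) (hq : q ≠ ∞) (u v : Lp E q μ) :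
    Integrable (fun x => ‖u x‖ ^ q.toReal + ‖v x‖ ^ q.toReal) μ :=
  (integrable_Lp_norm_rpow hq0 hq u).add (integrable_Lp_norm_rpow hq0 hq v)

lemma integral_Lp_norm_rpow_add (hq0 : q ≠ 0) (hq : q ≠ ∞) (u v : Lp E q μ) :
    ∫ x, (‖u x‖ ^ q.toReal + ‖v x‖ ^ q.toReal) ∂μ = ‖u‖ ^ q.toReal + ‖v‖ ^ q.toReal := by
  rw [integral_add (integrable_Lp_norm_rpow hq0 hq u) (integrable_Lp_norm_rpow hq0 hq v),
    Lp_norm_rpow_eq_integral hq0 hq, Lp_norm_rpow_eq_integral hq0 hq]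

lemma powConvexityGap_coeFn_ae_eq (r : ℝ) (u v : Lp E q μ) :
    (fun x => powConvexityGap r (u x) (v x)) =ᵐ[μ]
      fun x => 2 ^ (r - 1) * (‖u x‖ ^ r + ‖v x‖ ^ r) - ‖(u + v) x‖ ^ r := by
  filter_upwards [Lp.coeFn_add u v] with x hx
  rw [powConvexityGap, hx, Pi.add_apply]

lemma integrable_powConvexityGap (hq0 : q ≠ 0) (hq : q ≠ ∞) (u v : Lp E q μ) :
    Integrable (fun x => powConvexityGap q.toReal (u x) (v x)) μ :=
  (((integrable_Lp_norm_rpow_add hq0 hq u v).const_mul _).sub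
    (integrable_Lp_norm_rpow hq0 hq (u + v))).congr (powConvexityGap_coeFn_ae_eq _ u v).symm

lemma powConvexityGap_eq_integral [Fact (1 ≤ q)] (hq : q ≠ ∞) (u v : Lp E q μ) :
    powConvexityGap q.toReal u v = ∫ x, powConvexityGap q.toReal (u x) (v x) ∂μ := by
  have hq0 : q ≠ 0 := (zero_lt_one.trans_le Fact.out).ne'
  rw [integral_congr_ae (powConvexityGap_coeFn_ae_eq _ u v),
    integral_sub ((integrable_Lp_norm_rpow_add hq0 hq u v).const_mul _)
      (integrable_Lp_norm_rpow hq0 hq (u + v)),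
    integral_const_mul, integral_Lp_norm_rpow_add hq0 hq, ← Lp_norm_rpow_eq_integral hq0 hq,
    powConvexityGap]

lemma Lp_norm_sub_rpow_le [Fact (1 ≤ q)] (hq : q ≠ ∞) {ε C : ℝ}
    (h : ∀ a b : E, ‖a - b‖ ^ q.toReal ≤
      ε * (‖a‖ ^ q.toReal + ‖b‖ ^ q.toReal) + C * powConvexityGap q.toReal a b)
    (u v : Lp E q μ) : ‖u - v‖ ^ q.toReal ≤
      ε * (‖u‖ ^ q.toReal + ‖v‖ ^ q.toReal) + C * powConvexityGap q.toReal u v := by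
  have hq0 : q ≠ 0 := (zero_lt_one.trans_le Fact.out).ne'
  have hsum := (integrable_Lp_norm_rpow_add hq0 hq u v).const_mul ε
  have hgap := (integrable_powConvexityGap hq0 hq u v).const_mul C
  calc ‖u - v‖ ^ q.toReal = ∫ x, ‖(u - v) x‖ ^ q.toReal ∂μ := Lp_norm_rpow_eq_integral hq0 hq _
    _ ≤ ∫ x, (ε * (‖u x‖ ^ q.toReal + ‖v x‖ ^ q.toReal) +
          C * powConvexityGap q.toReal (u x) (v x)) ∂μ := by
      refine integral_mono_ae (integrable_Lp_norm_rpow hq0 hq (u - v)) (hsum.add hgap) ?_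
      filter_upwards [Lp.coeFn_sub u v] with x hx
      rw [hx]
      exact h (u x) (v x)
    _ = ε * (‖u‖ ^ q.toReal + ‖v‖ ^ q.toReal) + C * powConvexityGap q.toReal u v := by
      rw [integral_add hsum hgap, integral_const_mul, integral_const_mul,
        integral_Lp_norm_rpow_add hq0 hq, powConvexityGap_eq_integral hq]

theorem uniformConvexSpace_Lp [NormedSpace ℝ E] [UniformConvexSpace E] [Fact (1 ≤ q)]
    (hq1 : 1 < q) (hq : q ≠ ∞) : UniformConvexSpace (Lp E q μ) := by
  set r := q.toReal
  have hr : 1 < r := by simpa using (ENNReal.toReal_lt_toReal ENNReal.one_ne_top hq).2 hq1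
  refine ⟨fun ε hε => ?_⟩
  obtain ⟨C, hC, hCE⟩ := exists_pos_norm_sub_rpow_le E hr (ε := ε ^ r / 4) (by positivity)
  refine ⟨ε ^ r / (C * r * 2 ^ r), by positivity, fun u hu v hv huv => ?_⟩
  have hgap : ε ^ r ≤ ε ^ r / 4 * 2 + C * (2 ^ r - ‖u + v‖ ^ r) :=
    calc ε ^ r ≤ ‖u - v‖ ^ r := by gcongr
      _ ≤ ε ^ r / 4 * (‖u‖ ^ r + ‖v‖ ^ r) + C * powConvexityGap r u v :=
        Lp_norm_sub_rpow_le hq hCE u v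
      _ = ε ^ r / 4 * 2 + C * (2 ^ r - ‖u + v‖ ^ r) := by
        rw [powConvexityGap, hu, hv, Real.one_rpow, Real.rpow_sub_one two_ne_zero]
        ring
  have hbernoulli : 1 + r * (‖u + v‖ / 2 - 1) ≤ ‖u + v‖ ^ r / 2 ^ r := by
    have := one_add_mul_self_le_rpow_one_add (s := ‖u + v‖ / 2 - 1)
      (by linarith [norm_nonneg (u + v)]) hr.le
    rwa [add_sub_cancel, Real.div_rpow (norm_nonneg _) zero_le_two] at this
  rw [le_div_iff₀ (by positivity)] at hbernoulli
  rw [le_sub_comm, div_le_iff₀ (by positivity)]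
  linarith [mul_le_mul_of_nonneg_left hbernoulli hC.le]

end Lp

lemma convex_isoLq {X : Type*} [MeasurableSpace X] [PartialOrder X] {μ : Measure X} {q : ℝ≥0∞}
    {I : Set ℝ} (hI : Convex ℝ I) : Convex ℝ (isoLq μ q I) := by
  rintro g ⟨g₀, hg, ⟨N, hN, hg_mono⟩, hgI⟩ h ⟨h₀, hh, ⟨M, hM, hh_mono⟩, hhI⟩ s t hs ht hst
  refine ⟨s • g₀ + t • h₀, ?_, ⟨N ∪ M, measure_union_null hN hM, fun x hx y hy hxy => ?_⟩, ?_⟩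
  · filter_upwards [hg, hh, Lp.coeFn_add (s • g) (t • h), Lp.coeFn_smul s g, Lp.coeFn_smul t h]
      with x hgx hhx hadd hsg hth
    simp only [hadd, Pi.add_apply, hsg, hth, Pi.smul_apply, hgx, hhx]
  · rw [Set.mem_union, not_or] at hx hy
    simp only [Pi.add_apply, Pi.smul_apply, smul_eq_mul]
    gcongr
    exacts [hg_mono x hx.1 y hy.1 hxy, hh_mono x hx.2 y hy.2 hxy]
  · filter_upwards [hgI, hhI] with x hgx hhx
    exact hI hgx hhx hs ht hst

theorem stmt_6_general {X : Type*} [MeasurableSpace X] [PartialOrder X] {μ : Measure X}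
    {I : Set ℝ} (hI : I.OrdConnected) {q : ℝ≥0∞} [Fact (1 ≤ q)] (hq1 : 1 < q) (hq : q ≠ ∞)
    {f pf : Lp ℝ q μ}
    (hpf : pf ∈ isoLq μ q I ∧ ‖f - pf‖ = ⨅ h : isoLq μ q I, ‖f - (h : Lp ℝ q μ)‖)
    {ι : Type*} {l : Filter ι} {p : ι → Lp ℝ q μ} (hmem : ∀ i, p i ∈ isoLq μ q I)
    (hmin : Tendsto (fun i => ‖f - p i‖ ^ q.toReal) l
      (nhds (⨅ h : isoLq μ q I, ‖f - (h : Lp ℝ q μ)‖ ^ q.toReal))) :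
    Tendsto p l (nhds pf) := by
  have hr : 0 < q.toReal := ENNReal.toReal_pos (zero_lt_one.trans hq1).ne' hq
  have hbdd : BddBelow (Set.range fun h : isoLq μ q I => ‖f - (h : Lp ℝ q μ)‖) :=
    ⟨0, Set.forall_mem_range.2 fun _ => norm_nonneg _⟩
  have hpf_min : IsMinOn (fun h => ‖f - h‖) (isoLq μ q I) pf :=
    isMinOn_iff.2 fun h hh => hpf.2.trans_le (ciInf_le hbdd ⟨h, hh⟩)
  have hpf_min_rpow : IsMinOn (fun h => ‖f - h‖ ^ q.toReal) (isoLq μ q I) pf :=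
    isMinOn_iff.2 fun h hh =>
      Real.rpow_le_rpow (norm_nonneg _) (isMinOn_iff.1 hpf_min h hh) hr.le
  rw [hpf_min_rpow.iInf_eq hpf.1] at hmin
  have hnorm : Tendsto (fun i => ‖f - p i‖) l (nhds ‖f - pf‖) := by
    simpa only [Real.rpow_rpow_inv (norm_nonneg _) hr.ne'] using
      hmin.rpow_const (Or.inr (inv_nonneg.2 hr.le))
  have hconv : Convex ℝ (isoLq μ q I) := convex_isoLq hI.convex
  have := uniformConvexSpace_Lp (E := ℝ) (μ := μ) hq1 hq
  exact tendsto_of_isMinOn_norm_sub hconv hpf.1 hpf_min hmem hnorm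

/-- For `q ∈ (1, ∞)`, every minimizing sequence `(pₙ)` of the functional
`g ↦ ‖f − g‖_q^q` on `L^q_≤(X, μ, I)` converges in the `q`-norm to the unique minimizer
`p(f)`. -/
theorem stmt_6 {X : Type*} [MeasurableSpace X] [PartialOrder X]
    (μ : Measure X) [μ.IsComplete] (I : Set ℝ) (hIcl : IsClosed I)
    (hIint : I.OrdConnected) (hIne : I.Nonempty)
    (q : ℝ≥0∞) [Fact (1 ≤ q)] (hq1 : 1 < q) (hq : q ≠ ∞)
    (f pf : Lp ℝ q μ)
    (hpf : pf ∈ isoLq μ q I ∧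
      ‖f - pf‖ = ⨅ h : isoLq μ q I, ‖f - (h : Lp ℝ q μ)‖)
    (pn : ℕ → Lp ℝ q μ) (hmem : ∀ n, pn n ∈ isoLq μ q I)
    (hmin : Tendsto (fun n => ‖f - pn n‖ ^ q.toReal) atTop
      (nhds (⨅ h : isoLq μ q I, ‖f - (h : Lp ℝ q μ)‖ ^ q.toReal))) :
    Tendsto pn atTop (nhds pf) :=
  stmt_6_general hIint hq1 hq hpf hmem hmin
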